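/- Let (M,E,V) be a path geometry, ξ₀ ∈ Γ(E) a nowhere vanishing section, (∇,Π) the Weyl structure associated to ξ₀, τ its torsion, and α ∈ Ω¹(M) the one-form with Π_E = α ξ₀. Then for η₁,η₂ ∈ Γ(V) and ζᵢ := ι(𝓛(ξ₀,ηᵢ)) one has τ(η₁,ζ₂) = −½ α([ξ₀,ζ₁]) η₂ − α([η₁,ζ₂]) ξ₀. -/

import Mathlib

/-!
An algebraic model of the smooth calculus on a smooth manifold `M`:
`C` plays the role of the algebra `C^∞(M,ℝ)` of smooth functions and `X` plays the
role of the `C^∞(M,ℝ)`-module `𝔛(M)` of smooth vector fields, together with the Lie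
bracket of vector fields and the derivative of functions along vector fields
(i.e. a Lie–Rinehart algebra over `ℝ`).  Distributions (smooth subbundles of `TM`)
are modelled as `C`-submodules of `X`, linear connections on `TM` as operators
`X → X → X` with the usual tensoriality and Leibniz properties, and one-forms as
`C`-linear maps `X →ₗ[C] C`.
-/

open scoped TensorProduct

/-- The algebra of smooth functions together with the module of smooth vector
fields on a smooth manifold, with the Lie bracket and directional derivative. -/
structure VFCalc where
  /-- the smooth functions `C^∞(M,ℝ)` -/
  C : Type
  /-- the smooth vector fields `𝔛(M)` -/
  X : Type
  [ringC : CommRing C]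
  [algC : Algebra ℝ C]
  [grpX : AddCommGroup X]
  [modX : Module C X]
  /-- the Lie bracket of vector fields -/
  lie : X → X → X
  /-- the derivative `D ψ f = ψ · f` of a function along a vector field -/
  D : X → C → C
  lie_add_left : ∀ ψ₁ ψ₂ φ, lie (ψ₁ + ψ₂) φ = lie ψ₁ φ + lie ψ₂ φ
  lie_skew : ∀ ψ φ, lie φ ψ = - lie ψ φ
  jacobi : ∀ ψ₁ ψ₂ ψ₃, lie ψ₁ (lie ψ₂ ψ₃) = lie (lie ψ₁ ψ₂) ψ₃ + lie ψ₂ (lie ψ₁ ψ₃)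
  lie_smul_right : ∀ (f : C) (ψ φ : X), lie ψ (f • φ) = f • lie ψ φ + (D ψ f) • φ
  D_add_left : ∀ ψ₁ ψ₂ f, D (ψ₁ + ψ₂) f = D ψ₁ f + D ψ₂ f
  D_smul_left : ∀ (g : C) ψ f, D (g • ψ) f = g * D ψ f
  D_add_right : ∀ ψ f₁ f₂, D ψ (f₁ + f₂) = D ψ f₁ + D ψ f₂
  D_mul_right : ∀ ψ f₁ f₂, D ψ (f₁ * f₂) = f₁ * D ψ f₂ + f₂ * D ψ f₁
  D_algebraMap : ∀ ψ r, D ψ (algebraMap ℝ C r) = 0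

attribute [instance] VFCalc.ringC VFCalc.algC VFCalc.grpX VFCalc.modX

/-- the exterior derivative of a one-form, `dα(ψ,φ) = ψ·α(φ) − φ·α(ψ) − α([ψ,φ])` -/
def VFCalc.dform (P : VFCalc) (α : P.X →ₗ[P.C] P.C) (ψ φ : P.X) : P.C :=
  P.D ψ (α φ) - P.D φ (α ψ) - α (P.lie ψ φ)

/-- A (generalized) path geometry on a manifold `M` of dimension `2n+1`:
distributions `E, V ⊂ TM` (of rank `1` and `n`) with `E ∩ V = 0`, `V` involutive,
such that the Levi bracket induces an isomorphism `E ⊗ V ≅ Q := TM/(E ⊕ V)`. -/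
structure PathGeometry extends VFCalc where
  /-- the rank one distribution `E` -/
  E : Submodule C X
  /-- the rank `n` distribution `V` -/
  V : Submodule C X
  inf_bot : E ⊓ V = ⊥
  involutive : ∀ η₁ ∈ V, ∀ η₂ ∈ V, lie η₁ η₂ ∈ V
  /-- the Levi bracket `E ⊗ V → Q = TM/(E ⊔ V)` is an isomorphism of bundles -/
  leviIso : (↥E ⊗[C] ↥V) ≃ₗ[C] (X ⧸ (E ⊔ V))
  leviIso_apply : ∀ (ξ : ↥E) (η : ↥V),
    leviIso (ξ ⊗ₜ[C] η) = Submodule.Quotient.mk (lie (ξ : X) (η : X))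

namespace PathGeometry

variable (P : PathGeometry)

/-- the corank one distribution `H = E ⊕ V` -/
def H : Submodule P.C P.X := P.E ⊔ P.V

/-- the quotient bundle `Q = TM/H` -/
abbrev Q := P.X ⧸ P.H

/-- the quotient projection `q : TM → Q` -/
def q : P.X →ₗ[P.C] P.Q := P.H.mkQ

/-- the Levi bracket `𝓛(ψ,φ) = q([ψ,φ])` -/
def levi (ψ φ : P.X) : P.Q := P.q (P.lie ψ φ)

/-- the constant function `½` -/
noncomputable def half : P.C := algebraMap ℝ P.C (1/2)

/-- A (local) scale: a nowhere vanishing smooth section `ξ₀` of the line bundle `E`,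
i.e. a trivialization of `E`, modelled as a basis of `E` as free rank one module. -/
structure IsScale (ξ₀ : P.X) : Prop where
  mem : ξ₀ ∈ P.E
  span : ∀ ξ ∈ P.E, ∃ f : P.C, ξ = f • ξ₀
  basis : ∀ f : P.C, f • ξ₀ = 0 → f = 0

end PathGeometry

/-- A linear connection on `TM`. -/
structure Conn (P : VFCalc) where
  /-- the covariant derivative `cov ψ φ = ∇_ψ φ` -/
  cov : P.X → P.X → P.X
  add_left : ∀ ψ₁ ψ₂ φ, cov (ψ₁ + ψ₂) φ = cov ψ₁ φ + cov ψ₂ φ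
  smul_left : ∀ (f : P.C) ψ φ, cov (f • ψ) φ = f • cov ψ φ
  add_right : ∀ ψ φ₁ φ₂, cov ψ (φ₁ + φ₂) = cov ψ φ₁ + cov ψ φ₂
  leibniz : ∀ (f : P.C) ψ φ, cov ψ (f • φ) = f • cov ψ φ + (P.D ψ f) • φ

namespace Conn

variable {P : VFCalc} (cn : Conn P)

/-- the torsion `τ(ψ₁,ψ₂) = ∇_{ψ₁}ψ₂ − ∇_{ψ₂}ψ₁ − [ψ₁,ψ₂]` -/
def torsion (ψ₁ ψ₂ : P.X) : P.X := cn.cov ψ₁ ψ₂ - cn.cov ψ₂ ψ₁ - P.lie ψ₁ ψ₂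

/-- the curvature `R(ψ₁,ψ₂)(ψ₃) = ∇_{ψ₁}∇_{ψ₂}ψ₃ − ∇_{ψ₂}∇_{ψ₁}ψ₃ − ∇_{[ψ₁,ψ₂]}ψ₃` -/
def curv (ψ₁ ψ₂ ψ₃ : P.X) : P.X :=
  cn.cov ψ₁ (cn.cov ψ₂ ψ₃) - cn.cov ψ₂ (cn.cov ψ₁ ψ₃) - cn.cov (P.lie ψ₁ ψ₂) ψ₃

end Conn

/-- The Weyl structure associated to a scale `ξ₀`: a linear connection `∇` on `TM`
together with a decomposition `TM = E ⊕ V ⊕ ι(Q)` (encoded by the splitting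
`ι : Q → TM` of `q`) such that `E`, `V`, `ι(Q)` are parallel, `∇ξ₀ = 0`,
`ι ∘ 𝓛 : E ⊗ V → ι(Q)` is parallel, the torsion satisfies `τ(E,V) ⊂ ι(Q)`,
`τ(H,ι(Q)) ⊂ H` and the normalization
`𝓛(τ(ξ₀,ζ₁),η₂) = 2𝓛(ξ₀,τ(η₁,ζ₂))` for `ζᵢ = ι(𝓛(ξ₀,ηᵢ))`. -/
structure WeylStructure (P : PathGeometry) (ξ₀ : P.X) where
  conn : Conn P.toVFCalc
  ι : P.Q →ₗ[P.C] P.X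
  q_ι : ∀ w, P.q (ι w) = w
  parE : ∀ ψ : P.X, ∀ ξ ∈ P.E, conn.cov ψ ξ ∈ P.E
  parV : ∀ ψ : P.X, ∀ η ∈ P.V, conn.cov ψ η ∈ P.V
  parQ : ∀ (ψ : P.X) (w : P.Q), conn.cov ψ (ι w) ∈ LinearMap.range ι
  parScale : ∀ ψ : P.X, conn.cov ψ ξ₀ = 0
  parLevi : ∀ ψ : P.X, ∀ ξ ∈ P.E, ∀ η ∈ P.V,
    conn.cov ψ (ι (P.levi ξ η)) = ι (P.levi (conn.cov ψ ξ) η) + ι (P.levi ξ (conn.cov ψ η))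
  torsEV : ∀ ξ ∈ P.E, ∀ η ∈ P.V, conn.torsion ξ η ∈ LinearMap.range ι
  torsHQ : ∀ ψ ∈ P.H, ∀ w : P.Q, conn.torsion ψ (ι w) ∈ P.H
  norm : ∀ η₁ ∈ P.V, ∀ η₂ ∈ P.V,
    P.levi (conn.torsion ξ₀ (ι (P.levi ξ₀ η₁))) η₂
      = (2 : P.C) • P.levi ξ₀ (conn.torsion η₁ (ι (P.levi ξ₀ η₂)))

/-!
The one-form `α` vanishes on `V` and on `ι(Q)`, both of which are parallel, so the `E`-component
of `τ(ψ,ζ)` with `ψ ∈ E` or `ψ ∈ V` and `ζ ∈ ι(Q)` is `-α([ψ,ζ]) ξ₀`: the connection terms do not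
contribute (for `ψ = ξ₀` because `∇ξ₀ = 0`).  As `τ(H,ι(Q)) ⊂ H`, what remains is a `V`-component.

The `V`-component of `τ(η₁,ζ₂)` is pinned by the normalization condition.  The Levi bracket is
tensorial on `H` and vanishes on `E × E` and `V × V`, so with `a = α([ξ₀,ζ₁])` and `v` the
`V`-component of `τ(η₁,ζ₂)` the condition reads `-a 𝓛(ξ₀,η₂) = 2 𝓛(ξ₀,v)`.  Since `E` is free on
`ξ₀`, the isomorphism `E ⊗ V ≅ Q` makes `𝓛(ξ₀,·)` injective on `V` (`levi_scale_eq_zero`), hence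
`v = -½ a η₂`.
-/

namespace PathGeometry

variable {P : PathGeometry}

lemma half_add_half : P.half + P.half = 1 := by
  unfold half
  rw [← map_add]
  norm_num

lemma q_eq_zero_iff {ψ : P.X} : P.q ψ = 0 ↔ ψ ∈ P.H := by
  unfold q
  exact Submodule.Quotient.mk_eq_zero _

lemma q_of_mem_E {ψ : P.X} (h : ψ ∈ P.E) : P.q ψ = 0 :=
  q_eq_zero_iff.2 (Submodule.mem_sup_left h)

lemma q_of_mem_V {ψ : P.X} (h : ψ ∈ P.V) : P.q ψ = 0 :=
  q_eq_zero_iff.2 (Submodule.mem_sup_right h)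

lemma lie_add_right (ψ φ₁ φ₂ : P.X) : P.lie ψ (φ₁ + φ₂) = P.lie ψ φ₁ + P.lie ψ φ₂ := by
  rw [P.lie_skew (φ₁ + φ₂) ψ, P.lie_add_left, P.lie_skew φ₁ ψ, P.lie_skew φ₂ ψ, neg_add]

/-- Skewness gives `2 [ψ,ψ] = 0`, and `2` is invertible among the functions. -/
lemma lie_self (ψ : P.X) : P.lie ψ ψ = 0 := by
  have h2 : P.lie ψ ψ + P.lie ψ ψ = 0 := by
    nth_rewrite 1 [P.lie_skew ψ ψ]
    exact neg_add_cancel _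
  calc P.lie ψ ψ = (P.half + P.half) • P.lie ψ ψ := by rw [half_add_half, one_smul]
    _ = P.half • (P.lie ψ ψ + P.lie ψ ψ) := by rw [add_smul, smul_add]
    _ = 0 := by rw [h2, smul_zero]

lemma levi_add_left (ψ₁ ψ₂ φ : P.X) : P.levi (ψ₁ + ψ₂) φ = P.levi ψ₁ φ + P.levi ψ₂ φ := by
  unfold levi
  rw [P.lie_add_left, map_add]

lemma levi_add_right (ψ φ₁ φ₂ : P.X) : P.levi ψ (φ₁ + φ₂) = P.levi ψ φ₁ + P.levi ψ φ₂ := by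
  unfold levi
  rw [lie_add_right, map_add]

lemma levi_smul_right (f : P.C) (ψ : P.X) {φ : P.X} (hφ : P.q φ = 0) :
    P.levi ψ (f • φ) = f • P.levi ψ φ := by
  unfold levi
  rw [P.lie_smul_right, map_add, map_smul, map_smul, hφ, smul_zero, add_zero]

lemma levi_skew (ψ φ : P.X) : P.levi φ ψ = -P.levi ψ φ := by
  unfold levi
  rw [P.lie_skew ψ φ, map_neg]

lemma levi_smul_left (f : P.C) {ψ : P.X} (φ : P.X) (hψ : P.q ψ = 0) :
    P.levi (f • ψ) φ = f • P.levi ψ φ := by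
  rw [levi_skew φ, levi_smul_right f φ hψ, levi_skew φ ψ, smul_neg]

lemma levi_of_mem_V {η₁ η₂ : P.X} (h₁ : η₁ ∈ P.V) (h₂ : η₂ ∈ P.V) : P.levi η₁ η₂ = 0 :=
  q_of_mem_V (P.involutive _ h₁ _ h₂)

lemma levi_self (ψ : P.X) : P.levi ψ ψ = 0 := by
  unfold levi
  rw [lie_self, map_zero]

lemma eq_zero_of_smul_scale_mem_V {ξ₀ : P.X} (hξ₀ : P.IsScale ξ₀) {f : P.C}
    (h : f • ξ₀ ∈ P.V) : f = 0 := by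
  apply hξ₀.basis
  have : f • ξ₀ ∈ P.E ⊓ P.V := ⟨P.E.smul_mem f hξ₀.mem, h⟩
  rwa [P.inf_bot, Submodule.mem_bot] at this

/-- `𝓛(ξ₀,·)` is injective on `V`: the trivialization `C ≃ E` given by `ξ₀` identifies `V` with
`E ⊗ V`, on which the Levi bracket is injective. -/
lemma levi_scale_eq_zero {ξ₀ : P.X} (hξ₀ : P.IsScale ξ₀) {v : P.X} (hv : v ∈ P.V)
    (h : P.levi ξ₀ v = 0) : v = 0 := by
  let e : P.C ≃ₗ[P.C] ↥P.E :=
    LinearEquiv.ofBijective (LinearMap.toSpanSingleton P.C ↥P.E ⟨ξ₀, hξ₀.mem⟩) (by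
      constructor
      · rw [← LinearMap.ker_eq_bot, LinearMap.ker_eq_bot']
        intro f hf
        exact hξ₀.basis f (congrArg Subtype.val hf)
      · rintro ⟨ξ, hξ⟩
        obtain ⟨f, hf⟩ := hξ₀.span ξ hξ
        exact ⟨f, Subtype.ext hf.symm⟩)
  have he : e 1 = ⟨ξ₀, hξ₀.mem⟩ := one_smul P.C (⟨ξ₀, hξ₀.mem⟩ : ↥P.E)
  have h0 : (⟨ξ₀, hξ₀.mem⟩ : ↥P.E) ⊗ₜ[P.C] (⟨v, hv⟩ : ↥P.V) = 0 := by
    apply P.leviIso.injective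
    rw [map_zero, P.leviIso_apply]
    exact h
  have h1 : e.symm ⟨ξ₀, hξ₀.mem⟩ • (⟨v, hv⟩ : ↥P.V) = 0 := by
    have := congrArg (fun t => TensorProduct.lid P.C ↥P.V
      (LinearMap.rTensor ↥P.V e.symm.toLinearMap t)) h0
    simpa using this
  rw [← he, e.symm_apply_apply, one_smul] at h1
  exact congrArg Subtype.val h1

end PathGeometry

/-- first formula of Theorem 2.7 of the paper.  Let `(M,E,V)` be a
path geometry, `ξ₀` a nowhere vanishing section of `E`, `(∇,Π)` the associated Weyl
structure, `τ` its torsion, and `α ∈ Ω¹(M)` the one-form with `Π_E = α ξ₀` (i.e. for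
every vector field `ψ`, the `E`-component of `ψ` in the decomposition
`TM = E ⊕ V ⊕ ι(Q)` is `α(ψ) ξ₀`).  Then for `η₁, η₂ ∈ Γ(V)` and
`ζᵢ := ι(𝓛(ξ₀,ηᵢ))` one has `τ(η₁,ζ₂) = −½ α([ξ₀,ζ₁]) η₂ − α([η₁,ζ₂]) ξ₀`. -/
theorem torsion_V_Q_formula (P : PathGeometry) (ξ₀ : P.X) (hξ₀ : P.IsScale ξ₀)
    (W : WeylStructure P ξ₀) (α : P.X →ₗ[P.C] P.C)
    (hα : ∀ ψ : P.X, ψ - α ψ • ξ₀ - W.ι (P.q ψ) ∈ P.V) :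
    ∀ η₁ ∈ P.V, ∀ η₂ ∈ P.V,
      W.conn.torsion η₁ (W.ι (P.levi ξ₀ η₂)) =
        -((P.half * α (P.lie ξ₀ (W.ι (P.levi ξ₀ η₁)))) • η₂)
          - α (P.lie η₁ (W.ι (P.levi ξ₀ η₂))) • ξ₀ := by
  intro η₁ h₁ η₂ h₂
  have hαV : ∀ η ∈ P.V, α η = 0 := fun η hη => by
    apply PathGeometry.eq_zero_of_smul_scale_mem_V hξ₀
    have := P.V.sub_mem hη (hα η)
    rwa [PathGeometry.q_of_mem_V hη, map_zero, sub_zero, sub_sub_cancel] at this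
  have hαQ : ∀ w : P.Q, α (W.ι w) = 0 := fun w => by
    apply PathGeometry.eq_zero_of_smul_scale_mem_V hξ₀
    have := P.V.neg_mem (hα (W.ι w))
    rwa [W.q_ι, sub_sub, sub_add_cancel_right, neg_neg] at this
  have hαcov : ∀ (ψ : P.X) (w : P.Q), α (W.conn.cov ψ (W.ι w)) = 0 := fun ψ w => by
    obtain ⟨w', hw'⟩ := W.parQ ψ w
    rw [← hw', hαQ]
  -- elements of `H` have no `ι(Q)`-component
  have hH : ∀ ψ ∈ P.H, ψ - α ψ • ξ₀ ∈ P.V := fun ψ hψ => by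
    have := hα ψ
    rwa [PathGeometry.q_eq_zero_iff.2 hψ, map_zero, sub_zero] at this
  have hqξ : P.q ξ₀ = 0 := PathGeometry.q_of_mem_E hξ₀.mem
  have hξH : ξ₀ ∈ P.H := Submodule.mem_sup_left hξ₀.mem
  have hηH : η₁ ∈ P.H := Submodule.mem_sup_right h₁
  have hn := W.norm η₁ h₁ η₂ h₂
  have hu := hH _ (W.torsHQ ξ₀ hξH (P.levi ξ₀ η₁))
  have hv := hH _ (W.torsHQ η₁ hηH (P.levi ξ₀ η₂))
  have hαu : α (W.conn.torsion ξ₀ (W.ι (P.levi ξ₀ η₁)))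
      = -α (P.lie ξ₀ (W.ι (P.levi ξ₀ η₁))) := by
    unfold Conn.torsion
    rw [W.parScale, sub_zero, map_sub, hαcov, zero_sub]
  have hαv : α (W.conn.torsion η₁ (W.ι (P.levi ξ₀ η₂)))
      = -α (P.lie η₁ (W.ι (P.levi ξ₀ η₂))) := by
    unfold Conn.torsion
    rw [map_sub, map_sub, hαcov, hαV _ (W.parV _ _ h₁), sub_zero, zero_sub]
  rw [hαu] at hu
  rw [hαv] at hv
  generalize W.conn.torsion ξ₀ (W.ι (P.levi ξ₀ η₁)) = t at hn hu
  generalize W.conn.torsion η₁ (W.ι (P.levi ξ₀ η₂)) = s at hn hv ⊢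
  generalize α (P.lie ξ₀ (W.ι (P.levi ξ₀ η₁))) = a at hu ⊢
  generalize α (P.lie η₁ (W.ι (P.levi ξ₀ η₂))) = b at hv ⊢
  obtain ⟨u, hu', rfl⟩ : ∃ u ∈ P.V, t = u + (-a) • ξ₀ := ⟨_, hu, by abel⟩
  obtain ⟨v, hv', rfl⟩ : ∃ v ∈ P.V, s = v + (-b) • ξ₀ := ⟨_, hv, by abel⟩
  rw [PathGeometry.levi_add_left, PathGeometry.levi_of_mem_V hu' h₂, zero_add,
    PathGeometry.levi_smul_left _ _ hqξ, PathGeometry.levi_add_right,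
    PathGeometry.levi_smul_right _ _ hqξ, PathGeometry.levi_self, smul_zero, add_zero] at hn
  have hhalf : P.half * 2 = 1 := by rw [mul_two, PathGeometry.half_add_half]
  have hz : v + (P.half * a) • η₂ = 0 := by
    apply PathGeometry.levi_scale_eq_zero hξ₀ (P.V.add_mem hv' (P.V.smul_mem _ h₂))
    rw [PathGeometry.levi_add_right,
      PathGeometry.levi_smul_right _ _ (PathGeometry.q_of_mem_V h₂)]
    have := congrArg (fun x => P.half • x) hn
    simp only [smul_smul, hhalf, one_smul] at this
    rw [← this, ← add_smul]
    simp
  rw [eq_neg_of_add_eq_zero_left hz, neg_smul, sub_eq_add_neg]
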